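/- Let k ≥ 2, 0 ≤ j ≤ F_{k−1} − 1, and n = F_k + j (so that f(n) = F_{k+2} + j − 1). Let Aₙ be the set of factors of v₀ of length n that occur as subwords of the prefix (v₀(1), …, v₀(F_{k+1} − 2)). Then |Aₙ| = F_{k−1} − j − 1, every word of Aₙ occurs exactly twice as a subword of (v₀(1), …, v₀(f(n))), and each of the remaining F_{k−2} + 2j + 2 factors of v₀ of length n occurs exactly once as a subword of (v₀(1), …, v₀(f(n))). -/

import Mathlib

open scoped Classical

noncomputable section

/-- The Gauss map. -/
def gaussMap (x : ℝ) : ℝ := Int.fract x⁻¹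

/-- `pq α k` is the partial quotient `a_{k+1}` of the continued fraction of `α`. -/
def pq (α : ℝ) (k : ℕ) : ℕ := ⌊(gaussMap^[k] α)⁻¹⌋₊

/-- `qd α (n+1)` is the convergent denominator `q_n`; `qd α 0 = q_{-1} = 0`, `qd α 1 = q₀ = 1`. -/
def qd (α : ℝ) : ℕ → ℕ
  | 0 => 0
  | 1 => 1
  | (n+2) => pq α n * qd α (n+1) + qd α n

/-- The circle map sequence of rotation number `α` (value `true` means letter `1`). -/
def v0 (α : ℝ) (n : ℤ) : Bool := decide (1 - α ≤ Int.fract ((n : ℝ) * α))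

/-- The word `(v₀(m+1), …, v₀(m+n))`. -/
def word (α : ℝ) (m n : ℕ) : List Bool :=
  (List.range n).map (fun i => v0 α ((m : ℤ) + 1 + i))

/-- `w` is a factor (admissible word) of `v₀`. -/
def IsFactor (α : ℝ) (w : List Bool) : Prop := ∃ m : ℕ, w = word α m w.length

/-- `w` occurs as a subword of the prefix `(v₀(1), …, v₀(N))`. -/
def OccursIn (α : ℝ) (w : List Bool) (N : ℕ) : Prop :=
  ∃ m : ℕ, m + w.length ≤ N ∧ w = word α m w.length

/-- `exhaust α n` is `f(n)`: the least `N` such that every factor of length `n`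
occurs in `(v₀(1), …, v₀(N))`. -/
def exhaust (α : ℝ) (n : ℕ) : ℕ :=
  sInf {N | ∀ w : List Bool, w.length = n → IsFactor α w → OccursIn α w N}

/-- number of occurrences of `w` in the prefix `(v₀(1), …, v₀(N))`. -/
def occCount (α : ℝ) (w : List Bool) (N : ℕ) : ℕ :=
  ((Finset.range N).filter (fun m => m + w.length ≤ N ∧ word α m w.length = w)).card

/-- the word `(v(m), v(m+1), …, v(m+n-1))` of a two-sided sequence. -/
def wordAt (v : ℤ → Bool) (m : ℤ) (n : ℕ) : List Bool :=
  (List.range n).map (fun i => v (m + i))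

/-- the hull `Ω`: closure of the set of translates of `v₀`. -/
def hull (α : ℝ) : Set (ℤ → Bool) :=
  closure {u | ∃ m : ℤ, u = fun n => v0 α (n - m)}


/-- Fibonacci numbers with `F 0 = 1`, `F 1 = 1`, `F 2 = 2`. -/
def F (n : ℕ) : ℕ := Nat.fib (n + 1)

lemma golden_pos {α : ℝ} (hα : α = (Real.sqrt 5 - 1) / 2) : 0 < α := by
  have h : (1 : ℝ) < Real.sqrt 5 := Real.lt_sqrt_of_sq_lt (by norm_num)
  linarith

lemma golden_sq {α : ℝ} (hα : α = (Real.sqrt 5 - 1) / 2) : α ^ 2 = 1 - α := by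
  have h : Real.sqrt 5 ^ 2 = 5 := Real.sq_sqrt (by norm_num)
  subst hα
  linarith

lemma golden_lt_one {α : ℝ} (hα : α = (Real.sqrt 5 - 1) / 2) : α < 1 := by
  have := golden_sq hα
  have := pow_pos (golden_pos hα) 2
  linarith

lemma golden_irrational {α : ℝ} (hα : α = (Real.sqrt 5 - 1) / 2) : Irrational α := by
  have h : Irrational (Real.sqrt 5) := by
    simpa using Nat.Prime.irrational_sqrt (p := 5) (by norm_num)
  have h2 : Irrational ((Real.sqrt 5 - (1 : ℕ)) / (2 : ℕ)) :=
    (h.sub_natCast 1).div_natCast (by norm_num)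
  rw [hα]
  simpa using h2

lemma eq_zero_of_mul_golden_eq_int {α : ℝ} (hα : α = (Real.sqrt 5 - 1) / 2) {p c : ℤ}
    (h : (p : ℝ) * α = c) : p = 0 := by
  by_contra hp
  exact ((golden_irrational hα).intCast_mul hp).ne_int c h

/-- The signed error `F_k α - F_{k-1}` of the `k`-th convergent. -/
def convErr (α : ℝ) (k : ℕ) : ℝ := Nat.fib (k + 1) * α - Nat.fib k

lemma convErr_succ {α : ℝ} (hα : α = (Real.sqrt 5 - 1) / 2) (k : ℕ) :
    convErr α (k + 1) = -α * convErr α k := by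
  have h := golden_sq hα
  have hf : (Nat.fib (k + 2) : ℝ) = Nat.fib k + Nat.fib (k + 1) := by
    exact_mod_cast Nat.fib_add_two
  unfold convErr
  rw [show k + 1 + 1 = k + 2 from rfl, hf]
  linear_combination (Nat.fib (k + 1) : ℝ) * h

lemma convErr_ne_zero {α : ℝ} (hα : α = (Real.sqrt 5 - 1) / 2) (k : ℕ) : convErr α k ≠ 0 := by
  have h := (golden_pos hα).ne'
  induction k with
  | zero => simpa [convErr] using h
  | succ k ih =>
    rw [convErr_succ hα]
    exact mul_ne_zero (neg_ne_zero.2 h) ih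

/-- Consecutive pairs of Fibonacci numbers form a basis of `ℤ²`. -/
lemma exists_fib_coords (k : ℕ) (d c : ℤ) : ∃ x y : ℤ,
    d = x * Nat.fib (k + 2) + y * Nat.fib (k + 1) ∧ c = x * Nat.fib (k + 1) + y * Nat.fib k := by
  induction k with
  | zero => exact ⟨c, d - c, by simp, by simp⟩
  | succ k ih =>
    obtain ⟨x, y, hd, hc⟩ := ih
    refine ⟨y, x - y, ?_, ?_⟩
    · rw [hd, Nat.fib_add_two (n := k + 1)]; push_cast; ring
    · rw [hc, Nat.fib_add_two (n := k)]; push_cast; ring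

/-- Among `0 < d < F_{k+2}`, only `d = F_{k+1}` approximates better than the `k`-th convergent. -/
lemma eq_fib_of_approx {α : ℝ} (hα : α = (Real.sqrt 5 - 1) / 2) {k : ℕ} {d c : ℤ} {θ : ℝ}
    (hd0 : 0 < d) (hd : d < Nat.fib (k + 3)) (hθ : |θ| < 1)
    (h : (d : ℝ) * α - c = θ * convErr α k) : d = Nat.fib (k + 2) ∧ c = Nat.fib (k + 1) := by
  obtain ⟨x, y, hdx, hcx⟩ := exists_fib_coords k d c
  have hθe : θ = y - α * x := by
    apply mul_right_cancel₀ (convErr_ne_zero hα k)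
    have h1 := convErr_succ hα k
    rw [← h, hdx, hcx]
    have h2 : convErr α (k + 1) = Nat.fib (k + 2) * α - Nat.fib (k + 1) := rfl
    have h3 : convErr α k = Nat.fib (k + 1) * α - Nat.fib k := rfl
    push_cast
    linear_combination (x : ℝ) * h1 - (x : ℝ) * h2 - (y : ℝ) * h3
  rw [hθe, abs_lt] at hθ
  obtain ⟨hl, hu⟩ := hθ
  have ha := golden_pos hα
  have ha1 := golden_lt_one hα
  have hsq := golden_sq hα
  have hf1 : 0 < (Nat.fib (k + 1) : ℤ) := by exact_mod_cast Nat.fib_pos.2 (by omega)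
  have hf2 : 0 < (Nat.fib (k + 2) : ℤ) := by exact_mod_cast Nat.fib_pos.2 (by omega)
  have hf3 : (Nat.fib (k + 3) : ℤ) = Nat.fib (k + 1) + Nat.fib (k + 2) := by
    exact_mod_cast Nat.fib_add_two
  have half : 1 / 2 < α := by nlinarith
  have key : x = 1 ∧ y = 0 := by
    rcases lt_trichotomy y 0 with hy | hy | hy
    · exfalso
      have hy' : (y : ℝ) ≤ -1 := by exact_mod_cast (show y ≤ -1 by omega)
      rcases lt_or_ge x 0 with hx | hx
      · nlinarith
      · have : (0 : ℝ) ≤ x := by exact_mod_cast hx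
        nlinarith
    · subst hy
      have hx : 0 < x := by
        by_contra hx
        have : x * (Nat.fib (k + 2) : ℤ) ≤ 0 := mul_nonpos_of_nonpos_of_nonneg (by omega) hf2.le
        linarith
      refine ⟨?_, rfl⟩
      by_contra hx1
      have : (2 : ℝ) ≤ x := by exact_mod_cast (show 2 ≤ x by omega)
      push_cast at hl
      nlinarith
    · exfalso
      have hy' : (1 : ℝ) ≤ y := by exact_mod_cast (show 1 ≤ y by omega)
      rcases lt_or_ge 0 x with hx | hx
      · nlinarith
      · have : (x : ℝ) ≤ 0 := by exact_mod_cast hx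
        nlinarith
  obtain ⟨rfl, rfl⟩ := key
  simp [hdx, hcx]

lemma floor_succ_mul {α : ℝ} (h0 : 0 < α) (h1 : α < 1) (p : ℤ) :
    ⌊((p + 1 : ℤ) : ℝ) * α⌋ = ⌊(p : ℝ) * α⌋ + if v0 α p then 1 else 0 := by
  have hf := Int.floor_add_fract ((p : ℝ) * α)
  have hf0 := Int.fract_nonneg ((p : ℝ) * α)
  have hf1 := Int.fract_lt_one ((p : ℝ) * α)
  rw [Int.floor_eq_iff]
  simp only [v0, decide_eq_true_eq]
  split_ifs with h <;> push_cast <;> constructor <;> linarith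

lemma word_eq_iff (α : ℝ) (m m' n : ℕ) :
    word α m n = word α m' n ↔
      ∀ i < n, v0 α ((m : ℤ) + 1 + i) = v0 α ((m' : ℤ) + 1 + i) := by
  simp only [word, List.map_inj_left, List.bind_eq_flatMap, List.pure_def, List.mem_flatMap,
    List.mem_range, List.mem_singleton, forall_exists_index, and_imp]
  exact ⟨fun h i hi => h i i hi rfl, fun h a i hi ha => ha ▸ h i hi⟩

@[simp] lemma length_word (α : ℝ) (m n : ℕ) : (word α m n).length = n := by simp [word]

/-- The `k`-th shift changes the floor only where an orbit point falls between `0` and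
`convErr α k`. -/
lemma exists_crossing_of_floor_ne {α : ℝ} (hα : α = (Real.sqrt 5 - 1) / 2) {k : ℕ} {p : ℤ}
    (hp : 0 < p)
    (h : ⌊((p + Nat.fib (k + 1) : ℤ) : ℝ) * α⌋ ≠ ⌊(p : ℝ) * α⌋ + Nat.fib k) :
    ∃ (c : ℤ) (θ : ℝ), 0 < θ ∧ θ < 1 ∧
      ((p + Nat.fib (k + 1) : ℤ) : ℝ) * α - c = θ * convErr α k := by
  have hf := Int.floor_add_fract ((p : ℝ) * α)
  have hf0 := Int.fract_nonneg ((p : ℝ) * α)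
  have hf1 := Int.fract_lt_one ((p : ℝ) * α)
  set f := Int.fract ((p : ℝ) * α) with hfdef
  set q := ⌊(p : ℝ) * α⌋ with hq
  have hr : convErr α k = Nat.fib (k + 1) * α - Nat.fib k := rfl
  have hr0 := convErr_ne_zero hα k
  set r := convErr α k
  have hsum : ((p + Nat.fib (k + 1) : ℤ) : ℝ) * α = q + Nat.fib k + (f + r) := by
    push_cast; linarith
  have hcases : f + r < 0 ∨ 1 ≤ f + r := by
    by_contra! hc
    apply h
    rw [Int.floor_eq_iff, hsum]
    push_cast
    constructor <;> linarith
  rcases hcases with hc | hc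
  · have hrneg : r < 0 := by linarith
    have hfpos : 0 < f := by
      refine lt_of_le_of_ne hf0 fun h0 => ?_
      have := eq_zero_of_mul_golden_eq_int hα (p := p) (c := q) (by linarith)
      omega
    refine ⟨q + Nat.fib k, (f + r) / r, div_pos_of_neg_of_neg hc hrneg, ?_, ?_⟩
    · rw [div_lt_one_of_neg hrneg]; linarith
    · rw [div_mul_cancel₀ _ hr0, hsum]; push_cast; ring
  · have hrpos : 0 < r := by linarith
    have hlt : 1 < f + r := by
      refine lt_of_le_of_ne hc fun h0 => ?_
      have := eq_zero_of_mul_golden_eq_int hα (p := p + Nat.fib (k + 1)) (c := q + Nat.fib k + 1)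
        (by rw [hsum]; push_cast; linarith)
      omega
    refine ⟨q + Nat.fib k + 1, (f + r - 1) / r, div_pos (by linarith) hrpos, ?_, ?_⟩
    · rw [div_lt_one hrpos]; linarith
    · rw [div_mul_cancel₀ _ hr0, hsum]; push_cast; ring

/-- If shifting by `F_k` changes the word, one of its orbit points lies between `0` and
`convErr α k`. -/
lemma exists_crossing_of_word_ne {α : ℝ} (hα : α = (Real.sqrt 5 - 1) / 2) {k m n : ℕ}
    (h : word α (m + Nat.fib (k + 1)) n ≠ word α m n) :
    ∃ (P c : ℤ) (θ : ℝ), m + Nat.fib (k + 1) + 1 ≤ P ∧ P ≤ m + Nat.fib (k + 1) + n + 1 ∧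
      0 < θ ∧ θ < 1 ∧ (P : ℝ) * α - c = θ * convErr α k := by
  by_contra! hno
  apply h
  have hfl : ∀ p : ℤ, m + 1 ≤ p → p ≤ m + n + 1 →
      ⌊((p + Nat.fib (k + 1) : ℤ) : ℝ) * α⌋ = ⌊(p : ℝ) * α⌋ + Nat.fib k := by
    intro p hp1 hp2
    by_contra hne
    obtain ⟨c, θ, h0, h1, he⟩ := exists_crossing_of_floor_ne hα (by omega) hne
    exact hno _ c θ (by omega) (by omega) h0 h1 he
  rw [word_eq_iff]
  intro i hi
  have e1 := hfl ((m : ℤ) + 1 + i) (by omega) (by omega)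
  have e2 := hfl ((m : ℤ) + 1 + i + 1) (by omega) (by omega)
  have s1 := floor_succ_mul (golden_pos hα) (golden_lt_one hα) ((m : ℤ) + 1 + i)
  have s2 := floor_succ_mul (golden_pos hα) (golden_lt_one hα)
    ((m : ℤ) + 1 + i + Nat.fib (k + 1))
  rw [show (m : ℤ) + 1 + i + 1 + Nat.fib (k + 1) = (m : ℤ) + 1 + i + Nat.fib (k + 1) + 1 by ring]
    at e2
  rw [show ((m + Nat.fib (k + 1) : ℕ) : ℤ) + 1 + i = (m : ℤ) + 1 + i + Nat.fib (k + 1) by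
    push_cast; ring]
  rw [s2, s1, e1] at e2
  cases h1 : v0 α ((m : ℤ) + 1 + i) <;>
    cases h2 : v0 α ((m : ℤ) + 1 + i + Nat.fib (k + 1)) <;> simp [h1, h2] at e2 ⊢

/-- Two crossings of opposite sign inside a window of length `< F_{k+2}` are `F_{k+1}` apart. -/
lemma crossings_distance {α : ℝ} (hα : α = (Real.sqrt 5 - 1) / 2) {k : ℕ} {P Q c e : ℤ} {θ : ℝ}
    (h0 : 0 < θ) (h1 : θ < 1) (hPQ : |P - Q| < Nat.fib (k + 3))
    (h : ((P - Q : ℤ) : ℝ) * α - (c - e : ℤ) = -θ * convErr α k) :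
    P - Q = Nat.fib (k + 2) ∧ θ = α := by
  have hr := convErr_ne_zero hα k
  have hrs := convErr_succ hα k
  have hre : convErr α (k + 1) = Nat.fib (k + 2) * α - Nat.fib (k + 1) := rfl
  rw [abs_lt] at hPQ
  rcases lt_trichotomy (P - Q) 0 with hs | hs | hs
  · exfalso
    obtain ⟨hd, hc⟩ := eq_fib_of_approx hα (k := k) (d := -(P - Q)) (c := -(c - e)) (θ := θ)
      (by omega) (by omega) (by rw [abs_lt]; constructor <;> linarith)
      (by push_cast at h ⊢; linarith)
    have hd' : ((P - Q : ℤ) : ℝ) = -(Nat.fib (k + 2) : ℝ) := by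
      rw [show P - Q = -(Nat.fib (k + 2) : ℤ) by omega]; push_cast; rfl
    have hc' : ((c - e : ℤ) : ℝ) = -(Nat.fib (k + 1) : ℝ) := by
      rw [show c - e = -(Nat.fib (k + 1) : ℤ) by omega]; push_cast; rfl
    rw [hd', hc'] at h
    have := mul_right_cancel₀ hr (show -θ * convErr α k = α * convErr α k by linarith)
    linarith [golden_pos hα]
  · exfalso
    rw [hs] at h
    have hb : |convErr α k| ≤ 1 := by
      clear h hrs hre hr hPQ hs
      induction k with
      | zero => simp [convErr]; rw [abs_of_pos (golden_pos hα)]; exact (golden_lt_one hα).le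
      | succ k ih =>
        rw [convErr_succ hα, abs_mul, abs_neg, abs_of_pos (golden_pos hα)]
        nlinarith [golden_pos hα, golden_lt_one hα, abs_nonneg (convErr α k)]
    have h3 : |((c - e : ℤ) : ℝ)| = θ * |convErr α k| := by
      have : ((c - e : ℤ) : ℝ) = θ * convErr α k := by push_cast at h ⊢; linarith
      rw [this, abs_mul, abs_of_pos h0]
    have h4 : |((c - e : ℤ) : ℝ)| < 1 := by
      rw [h3]; nlinarith [abs_pos.2 hr]
    have h5 : |c - e| < 1 := by exact_mod_cast h4
    have h6 : c - e = 0 := Int.abs_lt_one_iff.1 h5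
    rw [h6] at h3
    have := mul_pos h0 (abs_pos.2 hr)
    simp at h3
    rcases h3 with h3 | h3
    · linarith
    · exact hr h3
  · obtain ⟨hd, hc⟩ := eq_fib_of_approx hα (k := k) (d := P - Q) (c := c - e) (θ := -θ)
      hs (by omega) (by rw [abs_lt]; constructor <;> linarith) h
    refine ⟨hd, ?_⟩
    rw [hd, hc] at h
    push_cast at h
    exact mul_right_cancel₀ hr (by linarith)

/-- The prefix of length `F_{k+2} - 2` has period `F_{k+1}`. -/
lemma word_add_fib {α : ℝ} (hα : α = (Real.sqrt 5 - 1) / 2) {k m n : ℕ}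
    (h : m + n + 2 ≤ Nat.fib (k + 3)) : word α (m + Nat.fib (k + 2)) n = word α m n := by
  by_contra hne
  obtain ⟨P, c, θ, hP1, hP2, h0, h1, he⟩ := exists_crossing_of_word_ne hα (k := k + 1) hne
  have ha := golden_pos hα
  have ha1 := golden_lt_one hα
  have hrs := convErr_succ hα k
  have hr := convErr_ne_zero hα k
  have hre : convErr α (k + 1) = Nat.fib (k + 2) * α - Nat.fib (k + 1) := rfl
  have hP : ((P - Nat.fib (k + 2) : ℤ) : ℝ) * α - (c - Nat.fib (k + 1) : ℤ) =
      (α * (1 - θ)) * convErr α k := by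
    push_cast
    linear_combination he + hre - (1 - θ) * hrs
  obtain ⟨hd, hc⟩ := eq_fib_of_approx hα (k := k) (d := P - Nat.fib (k + 2))
    (c := c - Nat.fib (k + 1)) (by simp only [Nat.add_assoc, Nat.reduceAdd] at hP1; omega)
    (by simp only [Nat.add_assoc, Nat.reduceAdd] at hP2; omega)
    (by rw [abs_lt]; constructor <;> nlinarith) hP
  rw [hd, hc] at hP
  push_cast at hP
  have := mul_right_cancel₀ hr (show α * (1 - θ) * convErr α k = -α * convErr α k by linarith)
  nlinarith

/-- Every occurrence at a position `≥ F_{k+2}` can be moved to the left. -/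
lemma exists_smaller_occurrence {α : ℝ} (hα : α = (Real.sqrt 5 - 1) / 2) {k m n : ℕ}
    (hn : n < Nat.fib (k + 3)) (hm : Nat.fib (k + 3) ≤ m) :
    ∃ m' < m, word α m' n = word α m n := by
  have ha := golden_pos hα
  have ha1 := golden_lt_one hα
  have hsq := golden_sq hα
  have hr := convErr_ne_zero hα k
  have hr1 : convErr α (k + 1) = -α * convErr α k := convErr_succ hα k
  have hr2 : convErr α (k + 2) = (1 - α) * convErr α k := by
    rw [convErr_succ hα, hr1, ← hsq]; ring
  have hr3 : convErr α (k + 3) = -α * (1 - α) * convErr α k := by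
    rw [convErr_succ hα, hr2]; ring
  have f2 : 0 < Nat.fib (k + 2) := Nat.fib_pos.2 (by omega)
  have f3 : Nat.fib (k + 3) = Nat.fib (k + 1) + Nat.fib (k + 2) := Nat.fib_add_two
  have f4 : Nat.fib (k + 4) = Nat.fib (k + 2) + Nat.fib (k + 3) := Nat.fib_add_two
  have f5 : Nat.fib (k + 5) = Nat.fib (k + 3) + Nat.fib (k + 4) := Nat.fib_add_two
  have shift : ∀ l, Nat.fib (l + 1) ≤ m →
      word α (m - Nat.fib (l + 1)) n = word α m n ∨
      ∃ (P c : ℤ) (θ : ℝ), (m : ℤ) + 1 ≤ P ∧ P ≤ (m : ℤ) + n + 1 ∧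
        0 < θ ∧ θ < 1 ∧ (P : ℝ) * α - c = θ * convErr α l := by
    intro l hl
    by_cases h : word α (m - Nat.fib (l + 1)) n = word α m n
    · exact Or.inl h
    · right
      obtain ⟨P, c, θ, h1, h2, h3⟩ := exists_crossing_of_word_ne hα
        (k := l) (m := m - Nat.fib (l + 1)) (n := n)
        (by rw [Nat.sub_add_cancel hl]; exact fun e => h e.symm)
      exact ⟨P, c, θ, by omega, by omega, h3⟩
  rcases shift (k + 2) hm with h | ⟨P2, c2, θ2, l2, u2, p2, q2, e2⟩
  · exact ⟨_, by simp only [Nat.add_assoc, Nat.reduceAdd] at h ⊢; omega, h⟩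
  rw [hr2] at e2
  rcases lt_or_ge m (Nat.fib (k + 4)) with hlt | hge
  · rcases shift (k + 1) (by simp only [Nat.add_assoc, Nat.reduceAdd]; omega) with
      h | ⟨P1, c1, θ1, l1, u1, p1, q1, e1⟩
    · exact ⟨_, by simp only [Nat.add_assoc, Nat.reduceAdd] at h ⊢; omega, h⟩
    exfalso
    rw [hr1] at e1
    obtain ⟨hd, -⟩ := crossings_distance hα (k := k) (P := P1) (Q := P2) (c := c1) (e := c2)
      (θ := θ1 * α + θ2 * (1 - α)) (by nlinarith) (by nlinarith)
      (by rw [abs_lt]; constructor <;> omega)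
      (by push_cast; linear_combination e1 - e2)
    obtain ⟨hd, hc⟩ := eq_fib_of_approx hα (k := k + 2) (d := P2) (c := c2) (θ := θ2)
      (by omega) (by simp only [Nat.add_assoc, Nat.reduceAdd]; omega)
      (by rw [abs_lt]; constructor <;> linarith) (by rw [hr2]; exact e2)
    rw [hd, hc] at e2
    have hre : convErr α (k + 3) = Nat.fib (k + 4) * α - Nat.fib (k + 3) := rfl
    simp only [Nat.add_assoc, Nat.reduceAdd, Int.cast_natCast] at e2
    have := mul_right_cancel₀ hr
      (show θ2 * (1 - α) * convErr α k = -α * (1 - α) * convErr α k by linarith)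
    nlinarith
  · rcases shift (k + 3) hge with
      h | ⟨P3, c3, θ3, l3, u3, p3, q3, e3⟩
    · exact ⟨_, by simp only [Nat.add_assoc, Nat.reduceAdd] at h ⊢; omega, h⟩
    exfalso
    rw [hr3] at e3
    obtain ⟨-, hθ⟩ := crossings_distance hα (k := k) (P := P3) (Q := P2) (c := c3) (e := c2)
      (θ := θ3 * (α * (1 - α)) + θ2 * (1 - α))
      (by have := mul_pos ha (sub_pos.2 ha1); nlinarith)
      (by have := mul_pos ha (sub_pos.2 ha1); nlinarith)
      (by rw [abs_lt]; constructor <;> omega)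
      (by push_cast; linear_combination e3 - e2)
    have := mul_pos ha (sub_pos.2 ha1)
    nlinarith

lemma exists_occurrence_lt {α : ℝ} (hα : α = (Real.sqrt 5 - 1) / 2) {k n : ℕ}
    (hn : n < Nat.fib (k + 3)) (m : ℕ) :
    ∃ m' < Nat.fib (k + 3), word α m' n = word α m n := by
  induction m using Nat.strong_induction_on with
  | _ m ih =>
    rcases lt_or_ge m (Nat.fib (k + 3)) with h | h
    · exact ⟨m, h, rfl⟩
    · obtain ⟨m', hm', he⟩ := exists_smaller_occurrence hα hn h
      obtain ⟨m'', hm'', he'⟩ := ih m' hm'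
      exact ⟨m'', hm'', he'.trans he⟩

/-- The Fibonacci word is not eventually periodic. -/
lemma not_eventually_periodic {α : ℝ} (hα : α = (Real.sqrt 5 - 1) / 2) {m d : ℕ} (hd : 0 < d)
    (h : ∀ i : ℕ, v0 α ((m : ℤ) + i) = v0 α ((m : ℤ) + i + d)) : False := by
  obtain ⟨c, hc⟩ : ∃ c : ℤ, ∀ i : ℕ,
      ⌊(((m : ℤ) + i + d : ℤ) : ℝ) * α⌋ = ⌊(((m : ℤ) + i : ℤ) : ℝ) * α⌋ + c := by
    refine ⟨⌊(((m : ℤ) + d : ℤ) : ℝ) * α⌋ - ⌊((m : ℤ) : ℝ) * α⌋, fun i => ?_⟩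
    induction i with
    | zero => simp
    | succ i ih =>
      have e1 := floor_succ_mul (golden_pos hα) (golden_lt_one hα) ((m : ℤ) + i)
      have e2 := floor_succ_mul (golden_pos hα) (golden_lt_one hα) ((m : ℤ) + i + d)
      rw [show (m : ℤ) + (i + 1 : ℕ) + d = (m : ℤ) + i + d + 1 by push_cast; ring,
        show (m : ℤ) + (i + 1 : ℕ) = (m : ℤ) + i + 1 by push_cast; ring, e1, e2, ih, h i]
      ring
  have hq : ∀ q : ℕ, ⌊(((m : ℤ) + (q * d : ℕ) : ℤ) : ℝ) * α⌋ = ⌊((m : ℤ) : ℝ) * α⌋ + q * c := by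
    intro q
    induction q with
    | zero => simp
    | succ q ih =>
      have := hc (q * d)
      rw [show (m : ℤ) + ((q + 1) * d : ℕ) = (m : ℤ) + (q * d : ℕ) + d by push_cast; ring, this, ih]
      push_cast; ring
  have hne : (d : ℝ) * α - c ≠ 0 := by
    intro h0
    have := eq_zero_of_mul_golden_eq_int hα (p := d) (c := c) (by push_cast; linarith)
    omega
  obtain ⟨q, hq1⟩ := exists_nat_gt (1 / |(d : ℝ) * α - c|)
  rw [div_lt_iff₀ (abs_pos.2 hne)] at hq1
  have hlt : |(q : ℝ) * ((d : ℝ) * α - c)| < 1 := by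
    have e := hq q
    have a1 := Int.floor_add_fract ((((m : ℤ) + (q * d : ℕ) : ℤ) : ℝ) * α)
    have a2 := Int.fract_nonneg ((((m : ℤ) + (q * d : ℕ) : ℤ) : ℝ) * α)
    have a3 := Int.fract_lt_one ((((m : ℤ) + (q * d : ℕ) : ℤ) : ℝ) * α)
    have b1 := Int.floor_add_fract (((m : ℤ) : ℝ) * α)
    have b2 := Int.fract_nonneg (((m : ℤ) : ℝ) * α)
    have b3 := Int.fract_lt_one (((m : ℤ) : ℝ) * α)
    rw [e] at a1
    push_cast at a1 a2 a3 b1 b2 b3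
    rw [abs_lt]
    constructor <;> nlinarith
  rw [abs_mul, Nat.abs_cast] at hlt
  linarith

/-- The factors of length `n`. -/
def factorSet (α : ℝ) (n : ℕ) : Set (List Bool) := Set.range fun m => word α m n

lemma factorSet_finite (α : ℝ) (n : ℕ) : (factorSet α n).Finite := by
  apply (List.finite_length_eq Bool n).subset
  rintro _ ⟨m, rfl⟩
  simp

lemma mem_factorSet_iff {α : ℝ} {n : ℕ} {w : List Bool} :
    w ∈ factorSet α n ↔ w.length = n ∧ IsFactor α w := by
  constructor
  · rintro ⟨m, rfl⟩
    exact ⟨by simp, m, by simp⟩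
  · rintro ⟨rfl, m, hm⟩
    exact ⟨m, hm.symm⟩

lemma word_succ (α : ℝ) (m n : ℕ) :
    word α m (n + 1) = word α m n ++ [v0 α ((m : ℤ) + 1 + n)] := by
  simp [word, List.range_succ]

lemma take_word_succ (α : ℝ) (m n : ℕ) : (word α m (n + 1)).take n = word α m n := by
  rw [word_succ, List.take_append_of_le_length (by simp), List.take_of_length_le (by simp)]

/-- There are at least `n + 1` factors of length `n`. -/
lemma succ_le_ncard_factorSet {α : ℝ} (hα : α = (Real.sqrt 5 - 1) / 2) (n : ℕ) :
    n + 1 ≤ (factorSet α n).ncard := by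
  induction n with
  | zero =>
    rw [zero_add, Nat.one_le_iff_ne_zero, Ne, Set.ncard_eq_zero (factorSet_finite α 0)]
    exact (Set.range_nonempty _).ne_empty
  | succ n ih =>
    refine lt_of_le_of_lt ih ?_
    have himg : (fun w : List Bool => w.take n) '' factorSet α (n + 1) = factorSet α n := by
      unfold factorSet
      rw [← Set.range_comp]
      congr 1
      funext m
      exact take_word_succ α m n
    by_contra! hle
    have hinj : Set.InjOn (fun w : List Bool => w.take n) (factorSet α (n + 1)) := by
      apply Set.injOn_of_ncard_image_eq _ (factorSet_finite α _)
      rw [himg]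
      refine le_antisymm ?_ hle
      rw [← himg]
      exact Set.ncard_image_le (factorSet_finite α _)
    have hdet : ∀ m m', word α m n = word α m' n → word α m (n + 1) = word α m' (n + 1) := by
      intro m m' h
      apply hinj ⟨m, rfl⟩ ⟨m', rfl⟩
      simpa only [take_word_succ] using h
    obtain ⟨m, m', hmm, he⟩ : ∃ m m', m < m' ∧ word α m n = word α m' n := by
      have hni : ¬ Function.Injective fun m => word α m n := fun hi =>
        Set.infinite_range_of_injective hi (factorSet_finite α n)
      simp only [Function.Injective, not_forall] at hni
      obtain ⟨a, b, hab, hne⟩ := hni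
      rcases lt_or_gt_of_ne hne with h | h
      · exact ⟨a, b, h, hab⟩
      · exact ⟨b, a, h, hab.symm⟩
    have hall : ∀ i, word α (m + i) (n + 1) = word α (m' + i) (n + 1) := by
      intro i
      induction i with
      | zero => exact hdet _ _ he
      | succ i ihi =>
        apply hdet
        rw [word_eq_iff] at ihi ⊢
        intro t ht
        have := ihi (t + 1) (by omega)
        push_cast at this ⊢
        convert this using 2 <;> ring
    refine not_eventually_periodic hα (m := m + 1) (d := m' - m) (by omega) fun i => ?_
    have := (word_eq_iff _ _ _ _).1 (hall i) 0 (by omega)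
    rw [show ((m + 1 : ℕ) : ℤ) + i + (m' - m : ℕ) = ((m' + i : ℕ) : ℤ) + 1 + (0 : ℕ) by omega,
      show ((m + 1 : ℕ) : ℤ) + i = ((m + i : ℕ) : ℤ) + 1 + (0 : ℕ) by push_cast; ring]
    exact this

/-- Counting occurrences when the windows starting in `[a, b)` list all factors exactly once and
those starting in `[0, a)` reappear after a shift by `q`. -/
lemma classification_of_shift {α : ℝ} {n a b q N : ℕ} (hn : 0 < n) (hab : b = a + n + 1)
    (haq : a ≤ q) (hqb : a + q < b)
    (hN : ∀ m, m + n ≤ N ↔ m < a)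
    (hcov : ∀ m, ∃ m', a ≤ m' ∧ m' < b ∧ word α m' n = word α m n)
    (hinj : ∀ m m', a ≤ m → m < b → a ≤ m' → m' < b → word α m n = word α m' n → m = m')
    (hshift : ∀ m < a, word α (m + q) n = word α m n) :
    {w : List Bool | w.length = n ∧ IsFactor α w ∧ OccursIn α w N}.ncard = a ∧
    (∀ w : List Bool, w.length = n → IsFactor α w → OccursIn α w N →
        occCount α w (exhaust α n) = 2) ∧
    {w : List Bool | w.length = n ∧ IsFactor α w ∧ ¬ OccursIn α w N}.ncard = n + 1 - a ∧
    (∀ w : List Bool, w.length = n → IsFactor α w → ¬ OccursIn α w N →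
        occCount α w (exhaust α n) = 1) := by
  have hex : exhaust α n = b - 1 + n := by
    apply le_antisymm
    · apply Nat.sInf_le
      rintro w rfl ⟨m, hm⟩
      obtain ⟨m', -, h2, h3⟩ := hcov m
      exact ⟨m', by omega, by rw [h3]; exact hm⟩
    · apply le_csInf
      · refine ⟨b - 1 + n, ?_⟩
        rintro w rfl ⟨m, hm⟩
        obtain ⟨m', -, h2, h3⟩ := hcov m
        exact ⟨m', by omega, by rw [h3]; exact hm⟩
      · intro M hM
        obtain ⟨m, hm, hw⟩ := hM (word α (b - 1) n) (by simp) ⟨b - 1, by simp⟩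
        rw [length_word] at hm hw
        by_contra! hlt
        rcases lt_or_ge m a with h | h
        · have := hinj (b - 1) (m + q) (by omega) (by omega) (by omega) (by omega)
            (by rw [hw, hshift m h])
          omega
        · have := hinj (b - 1) m (by omega) (by omega) (by omega) (by omega) hw
          omega
  have hcount : ∀ w : List Bool, w.length = n → occCount α w (exhaust α n) =
      ((Finset.range b).filter fun m => word α m n = w).card := by
    rintro w rfl
    unfold occCount
    congr 1
    ext m
    simp only [Finset.mem_filter, Finset.mem_range, hex]
    constructor
    · rintro ⟨-, h1, h2⟩; exact ⟨by omega, h2⟩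
    · rintro ⟨h1, h2⟩; exact ⟨by omega, by omega, h2⟩
  have hocc : ∀ w : List Bool, w.length = n → (OccursIn α w N ↔ ∃ m < a, word α m n = w) := by
    rintro w rfl
    simp only [OccursIn, hN, eq_comm]
  have hA : {w : List Bool | w.length = n ∧ IsFactor α w ∧ OccursIn α w N} =
      (fun m => word α m n) '' Set.Iio a := by
    ext w
    constructor
    · rintro ⟨h1, -, h3⟩
      obtain ⟨m, hm, rfl⟩ := (hocc w h1).1 h3
      exact ⟨m, hm, rfl⟩
    · rintro ⟨m, hm, rfl⟩
      exact ⟨by simp, ⟨m, by simp⟩, (hocc _ (by simp)).2 ⟨m, hm, rfl⟩⟩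
  have hS : factorSet α n = (fun m => word α m n) '' Set.Ico a b := by
    ext w
    constructor
    · rintro ⟨m, rfl⟩
      obtain ⟨m', h1, h2, h3⟩ := hcov m
      exact ⟨m', ⟨h1, h2⟩, h3⟩
    · rintro ⟨m, -, rfl⟩
      exact ⟨m, rfl⟩
  have hScard : (factorSet α n).ncard = n + 1 := by
    rw [hS, Set.InjOn.ncard_image, ← Finset.coe_Ico, Set.ncard_coe_finset, Nat.card_Ico]
    · omega
    · rintro x ⟨hx1, hx2⟩ y ⟨hy1, hy2⟩ h
      exact hinj x y hx1 hx2 hy1 hy2 h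
  have hAcard : {w : List Bool | w.length = n ∧ IsFactor α w ∧ OccursIn α w N}.ncard = a := by
    rw [hA, Set.InjOn.ncard_image, ← Finset.coe_Iio, Set.ncard_coe_finset, Nat.card_Iio]
    intro x hx y hy h
    simp only [Set.mem_Iio] at hx hy
    have := hinj (x + q) (y + q) (by omega) (by omega) (by omega) (by omega)
      (by rw [hshift x hx, hshift y hy]; exact h)
    omega
  refine ⟨hAcard, ?_, ?_, ?_⟩
  · intro w hw _ ho
    obtain ⟨m, hm, rfl⟩ := (hocc w hw).1 ho
    rw [hcount _ hw, Finset.card_eq_two]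
    refine ⟨m, m + q, by omega, ?_⟩
    ext x
    simp only [Finset.mem_filter, Finset.mem_range, Finset.mem_insert, Finset.mem_singleton]
    constructor
    · rintro ⟨hx, he⟩
      rcases lt_or_ge x a with h | h
      · have := hinj (x + q) (m + q) (by omega) (by omega) (by omega) (by omega)
          (by rw [hshift x h, hshift m hm, he])
        omega
      · have := hinj x (m + q) (by omega) (by omega) (by omega) (by omega)
          (by rw [hshift m hm, he])
        omega
    · rintro (rfl | rfl)
      · exact ⟨by omega, rfl⟩
      · exact ⟨by omega, hshift m hm⟩
  · have hdiff : {w : List Bool | w.length = n ∧ IsFactor α w ∧ ¬ OccursIn α w N} =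
        factorSet α n \ {w : List Bool | w.length = n ∧ IsFactor α w ∧ OccursIn α w N} := by
      ext w
      simp only [Set.mem_ofPred_eq, Set.mem_sdiff, mem_factorSet_iff]
      tauto
    have hsub : {w : List Bool | w.length = n ∧ IsFactor α w ∧ OccursIn α w N} ⊆
        factorSet α n := fun w hw => mem_factorSet_iff.2 ⟨hw.1, hw.2.1⟩
    rw [hdiff, Set.ncard_sdiff hsub ((factorSet_finite α n).subset hsub), hScard, hAcard]
  · intro w hw hf ho
    obtain ⟨m, ⟨h1, h2⟩, rfl⟩ := hS ▸ mem_factorSet_iff.2 ⟨hw, hf⟩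
    rw [hcount _ hw, Finset.card_eq_one]
    refine ⟨m, ?_⟩
    ext x
    simp only [Finset.mem_filter, Finset.mem_range, Finset.mem_singleton]
    constructor
    · rintro ⟨hx, he⟩
      rcases lt_or_ge x a with h | h
      · exact absurd ((hocc _ hw).2 ⟨x, h, he⟩) ho
      · exact hinj x m h hx h1 h2 he
    · rintro rfl
      exact ⟨h2, rfl⟩

/-- For `n = F_k + j` (`k ≥ 2`, `0 ≤ j ≤ F_{k-1} - 1`), the set `Aₙ` of
factors of length `n` occurring in `(v₀(1), …, v₀(F_{k+1} - 2))` has `F_{k-1} - j - 1`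
elements, each of which occurs exactly twice in `(v₀(1), …, v₀(f(n)))`, while each of
the remaining `F_{k-2} + 2j + 2` factors of length `n` occurs there exactly once. -/
theorem factor_classification_fib (α : ℝ) (hα : α = (Real.sqrt 5 - 1) / 2)
    (k j n : ℕ) (hk : 2 ≤ k) (hj : j ≤ F (k - 1) - 1) (hn : n = F k + j) :
    {w : List Bool | w.length = n ∧ IsFactor α w ∧ OccursIn α w (F (k + 1) - 2)}.ncard
        = F (k - 1) - j - 1 ∧
    (∀ w : List Bool, w.length = n → IsFactor α w → OccursIn α w (F (k + 1) - 2) →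
        occCount α w (exhaust α n) = 2) ∧
    {w : List Bool | w.length = n ∧ IsFactor α w ∧ ¬ OccursIn α w (F (k + 1) - 2)}.ncard
        = F (k - 2) + 2 * j + 2 ∧
    (∀ w : List Bool, w.length = n → IsFactor α w → ¬ OccursIn α w (F (k + 1) - 2) →
        occCount α w (exhaust α n) = 1) := by
  obtain ⟨l, rfl⟩ : ∃ l, k = l + 2 := ⟨k - 2, by omega⟩
  simp only [F, show l + 2 - 1 = l + 1 by omega, show l + 2 - 2 = l by omega,
    Nat.add_assoc, Nat.reduceAdd] at hj hn ⊢
  have f1 : 0 < Nat.fib (l + 1) := Nat.fib_pos.2 (by omega)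
  have f2 : 0 < Nat.fib (l + 2) := Nat.fib_pos.2 (by omega)
  have f3 : Nat.fib (l + 3) = Nat.fib (l + 1) + Nat.fib (l + 2) := Nat.fib_add_two
  have f4 : Nat.fib (l + 4) = Nat.fib (l + 2) + Nat.fib (l + 3) := Nat.fib_add_two
  set a := Nat.fib (l + 2) - j - 1 with ha
  have hshift : ∀ m < a, word α (m + Nat.fib (l + 3)) n = word α m n := fun m hm =>
    word_add_fib hα (k := l + 1) (by simp only [Nat.add_assoc, Nat.reduceAdd]; omega)
  have hcov : ∀ m, ∃ m', a ≤ m' ∧ m' < Nat.fib (l + 4) ∧ word α m' n = word α m n := by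
    intro m
    obtain ⟨m', h1, h2⟩ := exists_occurrence_lt hα (k := l + 1) (n := n)
      (by simp only [Nat.add_assoc, Nat.reduceAdd]; omega) m
    simp only [Nat.add_assoc, Nat.reduceAdd] at h1
    rcases lt_or_ge m' a with h | h
    · exact ⟨m' + Nat.fib (l + 3), by omega, by omega, (hshift m' h).trans h2⟩
    · exact ⟨m', h, h1, h2⟩
  have hinj : Set.InjOn (fun m => word α m n) (Set.Ico a (Nat.fib (l + 4))) := by
    have himg : (fun m => word α m n) '' Set.Ico a (Nat.fib (l + 4)) = factorSet α n := by
      refine (Set.image_subset_range _ _).antisymm ?_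
      rintro _ ⟨m, rfl⟩
      obtain ⟨m', h1, h2, h3⟩ := hcov m
      exact ⟨m', ⟨h1, h2⟩, h3⟩
    have hcard : (Set.Ico a (Nat.fib (l + 4))).ncard = n + 1 := by
      rw [← Finset.coe_Ico, Set.ncard_coe_finset, Nat.card_Ico]
      omega
    apply Set.injOn_of_ncard_image_eq _ (Set.finite_Ico _ _)
    refine le_antisymm (Set.ncard_image_le (Set.finite_Ico _ _)) ?_
    rw [himg, hcard]
    exact succ_le_ncard_factorSet hα n
  have key := classification_of_shift (α := α) (n := n) (a := a) (b := Nat.fib (l + 4))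
    (q := Nat.fib (l + 3)) (N := Nat.fib (l + 4) - 2) (by omega) (by omega) (by omega) (by omega)
    (fun m => by omega) hcov
    (fun m m' h1 h2 h3 h4 he => hinj ⟨h1, h2⟩ ⟨h3, h4⟩ he) hshift
  rwa [show n + 1 - a = Nat.fib (l + 1) + 2 * j + 2 by omega] at key

end
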